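/- Weil reciprocity for ℙ¹ in degree 2: let k be a field and f, g ∈ k(x)^× two nonzero rational functions. Then Σ_P Tr^{k(P)}_k ∂_P({f, g}) = 0 in K^M_1(k) = k^×, where the sum runs over all closed points P of ℙ¹_k, ∂_P is the tame symbol at P, and Tr is the norm map k(P)^× → k^×. Explicitly: ∏_P N_{k(P)/k}( (−1)^{v_P(f)v_P(g)} f^{v_P(g)} g^{−v_P(f)} mod m_P ) = 1. -/

import Mathlib

open Polynomial UniqueFactorizationMonoid

/-- The order of vanishing `v_p(f)` of a rational function `f` at the finite closed
point of `ℙ¹_k` given by the (monic irreducible) polynomial `p`. -/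
noncomputable def ordAt {k : Type*} [Field k] [DecidableEq k] (p : Polynomial k) (f : RatFunc k) : ℤ :=
  ((normalizedFactors f.num).count p : ℤ) - ((normalizedFactors f.denom).count p : ℤ)

/-- The residue at `p` (in the residue field `k(p) = k[x]/(p)`) of a rational function
whose valuation at `p` is `0`. -/
noncomputable def residueAt {k : Type*} [Field k] (p : Polynomial k) (f : RatFunc k) :
    AdjoinRoot p :=
  AdjoinRoot.mk p f.num * Ring.inverse (AdjoinRoot.mk p f.denom)

/-- The tame symbol `∂_p({f,g}) = (−1)^{v_p(f)v_p(g)} f^{v_p(g)} g^{−v_p(f)} mod m_p`. -/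
noncomputable def tameAt {k : Type*} [Field k] [DecidableEq k] (p : Polynomial k)
    (f g : RatFunc k) : AdjoinRoot p :=
  residueAt p ((-1 : RatFunc k) ^ (ordAt p f * ordAt p g)
    * f ^ (ordAt p g) * g ^ (-(ordAt p f)))

/-- The order of vanishing at the place at infinity: `v_∞(f) = −intDegree f`. -/
noncomputable def ordInf {k : Type*} [Field k] (f : RatFunc k) : ℤ := -f.intDegree

/-- The residue at infinity of a rational function with `v_∞ = 0`: the ratio of the
leading coefficients of numerator and denominator. -/
noncomputable def residueInf {k : Type*} [Field k] (f : RatFunc k) : k :=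
  f.num.leadingCoeff / f.denom.leadingCoeff

/-- The tame symbol at the place at infinity (residue field `k`). -/
noncomputable def tameInf {k : Type*} [Field k] (f g : RatFunc k) : k :=
  residueInf ((-1 : RatFunc k) ^ (ordInf f * ordInf g)
    * f ^ (ordInf g) * g ^ (-(ordInf f)))

/-!
The product of the norms of all tame symbols of `f` and `g` is bimultiplicative and antisymmetric,
and `k(x)ˣ` is generated by the constants and the monic irreducible polynomials, so it is enough to
evaluate it on these. Two constants have trivial tame symbols everywhere. For a constant `c` and
`p`, the norm `c ^ deg p` at `p` cancels against the symbol at infinity; for `p` and `p`, both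
factors are signs, with exponents `deg p` and `(deg p)²`. For `p ≠ q` the norm of `q mod p` is the
resultant `Res(p, q)`, and reciprocity is `Res(p, q) = (-1) ^ (deg p * deg q) * Res(q, p)`, the sign
being the tame symbol at infinity.
-/

section Resultant

theorem det_aeval_eq_prod_roots {k ι : Type*} [Field k] [Fintype ι] [DecidableEq ι]
    (M : Matrix ι ι k) {q : k[X]} (hq : q.Splits) :
    (aeval M q).det = q.leadingCoeff ^ Fintype.card ι *
      (q.roots.map fun β => (-1) ^ Fintype.card ι * M.charpoly.eval β).prod := by
  have det_sub_scalar (β : k) :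
      (aeval M (X - C β)).det = (-1) ^ Fintype.card ι * M.charpoly.eval β := by
    rw [Matrix.eval_charpoly, ← Matrix.det_neg, neg_sub, map_sub, aeval_X, aeval_C]
    rfl
  let detAeval : k[X] →* k := Matrix.detMonoidHom.comp (aeval M).toMonoidHom
  have detAeval_C (c : k) : detAeval (C c) = c ^ Fintype.card ι := by
    simp [detAeval, Algebra.algebraMap_eq_smul_one]
  calc
    detAeval q = detAeval (C q.leadingCoeff * (q.roots.map (X - C ·)).prod) := by
      rw [← hq.eq_prod_roots]
    _ = _ := by
      rw [map_mul, detAeval_C, map_multiset_prod, Multiset.map_map]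
      exact congrArg _ (congrArg _ (Multiset.map_congr rfl fun β _ => det_sub_scalar β))

variable {R : Type*} [CommRing R]

-- Over the trivial ring `M.charpoly.natDegree` is `0`, not `card ι`: hence the explicit degree.
theorem det_aeval_eq_resultant {ι : Type*} [Fintype ι] [DecidableEq ι]
    (M : Matrix ι ι R) (q : R[X]) :
    (aeval M q).det = resultant M.charpoly q (Fintype.card ι) := by
  have map_aeval {R S : Type _} [CommRing R] [CommRing S] (φ : R →+* S) (M : Matrix ι ι R)
      (q : R[X]) : aeval (M.map φ) (q.map φ) = (aeval M q).map φ :=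
    (map_aeval_eq_aeval_map (φ := φ) (ψ := φ.mapMatrix)
      (RingHom.ext fun x => by ext; simp [Matrix.algebraMap_matrix_apply, apply_ite φ]) q M).symm
  induction q using induction_of_Splits_of_injective_of_surjective with
  | Splits R q hq =>
    rw [det_aeval_eq_prod_roots M hq, resultant_comm, ← Matrix.charpoly_natDegree_eq_dim M,
      resultant_eq_prod_eval _ _ _ le_rfl hq, Multiset.prod_map_mul, Multiset.map_const',
      Multiset.prod_replicate, ← hq.natDegree_eq_card_roots]
    ring
  | injective R S φ hφ q IH =>
    apply hφ
    rw [RingHom.map_det, RingHom.mapMatrix_apply, ← map_aeval, IH, Matrix.charpoly_map,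
      resultant_map_map, natDegree_map_eq_of_injective hφ]
  | surjective R S φ hφ q IH =>
    obtain ⟨q', rfl, hdeg⟩ := exists_degree_eq_of_mem_lifts (Polynomial.map_surjective φ hφ q)
    obtain ⟨M', rfl⟩ : ∃ M' : Matrix ι ι R, M'.map φ = M :=
      ⟨M.map (Function.surjInv hφ), by ext; simp [Function.surjInv_eq hφ]⟩
    rw [map_aeval, ← RingHom.mapMatrix_apply, ← RingHom.map_det, IH, Matrix.charpoly_map,
      resultant_map_map, natDegree_eq_natDegree hdeg]

theorem charpoly_leftMulMatrix_root {p : R[X]} (hp : p.Monic) :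
    (Algebra.leftMulMatrix (AdjoinRoot.powerBasis' hp).basis (AdjoinRoot.root p)).charpoly = p := by
  nontriviality R
  refine eq_of_monic_of_dvd_of_natDegree_le hp (Matrix.charpoly_monic _) ?_ ?_
  · rw [← AdjoinRoot.mk_eq_zero, ← AdjoinRoot.aeval_eq]
    apply Algebra.leftMulMatrix_injective (AdjoinRoot.powerBasis' hp).basis
    rw [← aeval_algHom_apply, Matrix.aeval_self_charpoly, map_zero]
  · simp

theorem norm_adjoinRoot_mk_eq_resultant {p : R[X]} (hp : p.Monic) (q : R[X]) :
    Algebra.norm R (AdjoinRoot.mk p q) = resultant p q := by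
  nontriviality R
  rw [← AdjoinRoot.aeval_eq, Algebra.norm_eq_matrix_det (AdjoinRoot.powerBasis' hp).basis,
    ← aeval_algHom_apply, det_aeval_eq_resultant, charpoly_leftMulMatrix_root hp]
  simp

theorem norm_adjoinRoot_mk_C {p : R[X]} (hp : p.Monic) (c : R) :
    Algebra.norm R (AdjoinRoot.mk p (C c)) = c ^ p.natDegree := by
  rw [norm_adjoinRoot_mk_eq_resultant hp, resultant_C_right, hp.coeff_natDegree]
  simp

theorem norm_adjoinRoot_mk_comm {p q : R[X]} (hp : p.Monic) (hq : q.Monic) :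
    Algebra.norm R (AdjoinRoot.mk p q) =
      (-1) ^ (p.natDegree * q.natDegree) * Algebra.norm R (AdjoinRoot.mk q p) := by
  rw [norm_adjoinRoot_mk_eq_resultant hp, norm_adjoinRoot_mk_eq_resultant hq, resultant_comm]

end Resultant

section TameFunction

variable {K : Type*} [Field K]

/-- The function `(−1)^{v(f)v(g)} f^{v(g)} g^{−v(f)}` whose residue at a place with valuation `v`
is the tame symbol there. -/
def tameFunction (v : K → ℤ) (f g : K) : K :=
  (-1) ^ (v f * v g) * f ^ v g * g ^ (-v f)

theorem tameFunction_mul_left {v : K → ℤ} {f₁ f₂ : K}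
    (hv : v (f₁ * f₂) = v f₁ + v f₂) {g : K} (hg : g ≠ 0) :
    tameFunction v (f₁ * f₂) g = tameFunction v f₁ g * tameFunction v f₂ g := by
  rw [tameFunction, hv, mul_zpow, add_mul, zpow_add₀ (neg_ne_zero.2 one_ne_zero), neg_add,
    zpow_add₀ hg]
  simp only [tameFunction]
  ring

theorem tameFunction_mul_swap (v : K → ℤ) {f g : K} (hf : f ≠ 0) (hg : g ≠ 0) :
    tameFunction v f g * tameFunction v g f = 1 := by
  have sign_sq : (-1 : K) ^ (v f * v g) * (-1) ^ (v f * v g) = 1 := by simp [← mul_zpow]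
  rw [tameFunction, tameFunction, mul_comm (v g), zpow_neg, zpow_neg]
  have hf' := zpow_ne_zero (v g) hf
  have hg' := zpow_ne_zero (v f) hg
  field_simp
  simpa [sq] using sign_sq

theorem tameFunction_eq_zpow {v : K → ℤ} {f : K} (hf : v f = 0) (g : K) :
    tameFunction v f g = f ^ v g := by
  simp [tameFunction, hf]

theorem tameFunction_ne_zero (v : K → ℤ) {f g : K} (hf : f ≠ 0) (hg : g ≠ 0) :
    tameFunction v f g ≠ 0 :=
  left_ne_zero_of_mul_eq_one (tameFunction_mul_swap v hf hg)

end TameFunction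

section FinitePlaces

variable {k : Type*} [Field k] {p : k[X]}

section Order

variable [DecidableEq k]

theorem count_normalizedFactors_eq_zero {u : k[X]} (hp : Irreducible p) (hpm : p.Monic)
    (hu : u ≠ 0) : (normalizedFactors u).count p = 0 ↔ ¬ p ∣ u := by
  simp [Multiset.count_eq_zero, Polynomial.mem_normalizedFactors_iff hu, hp, hpm]

theorem ordAt_algebraMap (p u : k[X]) :
    ordAt p (algebraMap k[X] (RatFunc k) u) = (normalizedFactors u).count p := by
  simp [ordAt]

theorem ordAt_algebraMap_eq_zero (hp : Irreducible p) (hpm : p.Monic) {u : k[X]}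
    (hu : ¬ p ∣ u) : ordAt p (algebraMap k[X] (RatFunc k) u) = 0 := by
  have hu₀ : u ≠ 0 := fun h => hu (h ▸ dvd_zero p)
  rw [ordAt_algebraMap, (count_normalizedFactors_eq_zero hp hpm hu₀).2 hu, Nat.cast_zero]

theorem ordAt_algebraMap_self (hp : Irreducible p) (hpm : p.Monic) :
    ordAt p (algebraMap k[X] (RatFunc k) p) = 1 := by
  simp [ordAt_algebraMap, normalizedFactors_irreducible hp, hpm.normalize_eq_self]

theorem ordAt_one (p : k[X]) : ordAt p 1 = 0 := by
  simp [ordAt]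

theorem ordAt_div (p : k[X]) {u v : k[X]} (hu : u ≠ 0) (hv : v ≠ 0) :
    ordAt p (algebraMap k[X] (RatFunc k) u / algebraMap k[X] (RatFunc k) v) =
      (normalizedFactors u).count p - (normalizedFactors v).count p := by
  set f := algebraMap k[X] (RatFunc k) u / algebraMap k[X] (RatFunc k) v with hf
  have hf₀ : f ≠ 0 := div_ne_zero (RatFunc.algebraMap_ne_zero hu) (RatFunc.algebraMap_ne_zero hv)
  have factors_eq := congrArg (fun w => (normalizedFactors w).count p)
    ((RatFunc.num_mul_eq_mul_denom_iff hv).2 hf)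
  simp only [normalizedFactors_mul (RatFunc.num_ne_zero hf₀) hv,
    normalizedFactors_mul hu f.denom_ne_zero, Multiset.count_add] at factors_eq
  rw [ordAt]
  omega

theorem ordAt_mul (p : k[X]) {f g : RatFunc k} (hf : f ≠ 0) (hg : g ≠ 0) :
    ordAt p (f * g) = ordAt p f + ordAt p g := by
  have hfn := RatFunc.num_ne_zero hf
  have hgn := RatFunc.num_ne_zero hg
  conv_lhs => rw [← f.num_div_denom, ← g.num_div_denom, div_mul_div_comm, ← map_mul, ← map_mul]
  rw [ordAt_div p (mul_ne_zero hfn hgn) (mul_ne_zero f.denom_ne_zero g.denom_ne_zero),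
    normalizedFactors_mul hfn hgn, normalizedFactors_mul f.denom_ne_zero g.denom_ne_zero]
  simp only [ordAt, Multiset.count_add]
  push_cast
  ring

theorem ordAt_zpow (p : k[X]) {f : RatFunc k} (hf : f ≠ 0) (n : ℤ) :
    ordAt p (f ^ n) = n * ordAt p f := by
  let ordHom : (RatFunc k)ˣ →* Multiplicative ℤ :=
    .mk' (fun u => .ofAdd (ordAt p u)) fun u v => by
      rw [Units.val_mul, ordAt_mul p u.ne_zero v.ne_zero, ofAdd_add]
  have := congrArg Multiplicative.toAdd (map_zpow ordHom (Units.mk0 f hf) n)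
  simpa [ordHom] using this

theorem ordAt_neg_one (p : k[X]) : ordAt p (-1) = 0 := by
  have := ordAt_mul p (neg_ne_zero.2 (one_ne_zero' (RatFunc k))) (neg_ne_zero.2 one_ne_zero)
  rw [neg_mul_neg, one_mul, ordAt_one] at this
  omega

theorem ordAt_tameFunction (p : k[X]) {f g : RatFunc k} (hf : f ≠ 0) (hg : g ≠ 0) :
    ordAt p (tameFunction (ordAt p) f g) = 0 := by
  have neg_one_ne_zero : (-1 : RatFunc k) ≠ 0 := neg_ne_zero.2 one_ne_zero
  rw [tameFunction, ordAt_mul p (mul_ne_zero (zpow_ne_zero _ neg_one_ne_zero)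
    (zpow_ne_zero _ hf)) (zpow_ne_zero _ hg), ordAt_mul p (zpow_ne_zero _ neg_one_ne_zero)
    (zpow_ne_zero _ hf), ordAt_zpow p neg_one_ne_zero, ordAt_zpow p hf, ordAt_zpow p hg,
    ordAt_neg_one]
  ring

theorem not_dvd_denom_of_ordAt_eq_zero (hp : Irreducible p) (hpm : p.Monic) {f : RatFunc k}
    (hf : f ≠ 0) (h : ordAt p f = 0) : ¬ p ∣ f.denom := by
  intro hd
  have hn : ¬ p ∣ f.num := fun hn =>
    hp.not_isUnit (f.isCoprime_num_denom.isUnit_of_dvd' hn hd)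
  rw [ordAt, (count_normalizedFactors_eq_zero hp hpm (RatFunc.num_ne_zero hf)).2 hn] at h
  exact (count_normalizedFactors_eq_zero hp hpm f.denom_ne_zero).1 (by omega) hd

end Order

section Residue

theorem isUnit_adjoinRoot_mk (hp : Irreducible p) {u : k[X]} (hu : ¬ p ∣ u) :
    IsUnit (AdjoinRoot.mk p u) := by
  have : Fact (Irreducible p) := ⟨hp⟩
  exact IsUnit.mk0 _ (AdjoinRoot.mk_eq_zero.not.2 hu)

theorem residueAt_algebraMap (p u : k[X]) :
    residueAt p (algebraMap k[X] (RatFunc k) u) = AdjoinRoot.mk p u := by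
  simp [residueAt]

theorem residueAt_one (p : k[X]) : residueAt p 1 = 1 := by
  simp [residueAt]

theorem residueAt_mul_mk_denom (hp : Irreducible p) {f : RatFunc k} (hf : ¬ p ∣ f.denom) :
    residueAt p f * AdjoinRoot.mk p f.denom = AdjoinRoot.mk p f.num :=
  Ring.inverse_mul_cancel_right _ _ (isUnit_adjoinRoot_mk hp hf)

theorem residueAt_mul (hp : Irreducible p) {f g : RatFunc k} (hf : ¬ p ∣ f.denom)
    (hg : ¬ p ∣ g.denom) : residueAt p (f * g) = residueAt p f * residueAt p g := by
  have hfg : ¬ p ∣ (f * g).denom := fun h =>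
    (hp.prime.dvd_or_dvd (h.trans (RatFunc.denom_mul_dvd f g))).elim hf hg
  have num_denom := congrArg (AdjoinRoot.mk p) (RatFunc.num_denom_mul f g)
  simp only [map_mul, ← residueAt_mul_mk_denom hp hf, ← residueAt_mul_mk_denom hp hg,
    ← residueAt_mul_mk_denom hp hfg] at num_denom
  have denoms_isUnit := ((isUnit_adjoinRoot_mk hp hf).mul (isUnit_adjoinRoot_mk hp hg)).mul
    (isUnit_adjoinRoot_mk hp hfg)
  apply denoms_isUnit.mul_right_cancel
  linear_combination num_denom

end Residue

section TameSymbol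

variable [DecidableEq k]

theorem tameAt_eq_residueAt (p : k[X]) (f g : RatFunc k) :
    tameAt p f g = residueAt p (tameFunction (ordAt p) f g) :=
  rfl

theorem not_dvd_denom_tameFunction (hp : Irreducible p) (hpm : p.Monic) {f g : RatFunc k}
    (hf : f ≠ 0) (hg : g ≠ 0) : ¬ p ∣ (tameFunction (ordAt p) f g).denom :=
  not_dvd_denom_of_ordAt_eq_zero hp hpm (tameFunction_ne_zero _ hf hg) (ordAt_tameFunction p hf hg)

theorem tameAt_mul_left (hp : Irreducible p) (hpm : p.Monic) {f₁ f₂ g : RatFunc k}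
    (hf₁ : f₁ ≠ 0) (hf₂ : f₂ ≠ 0) (hg : g ≠ 0) :
    tameAt p (f₁ * f₂) g = tameAt p f₁ g * tameAt p f₂ g := by
  simp only [tameAt_eq_residueAt]
  rw [tameFunction_mul_left (ordAt_mul p hf₁ hf₂) hg, residueAt_mul hp
    (not_dvd_denom_tameFunction hp hpm hf₁ hg) (not_dvd_denom_tameFunction hp hpm hf₂ hg)]

theorem tameAt_mul_swap (hp : Irreducible p) (hpm : p.Monic) {f g : RatFunc k}
    (hf : f ≠ 0) (hg : g ≠ 0) : tameAt p f g * tameAt p g f = 1 := by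
  simp only [tameAt_eq_residueAt]
  rw [← residueAt_mul hp (not_dvd_denom_tameFunction hp hpm hf hg)
    (not_dvd_denom_tameFunction hp hpm hg hf), tameFunction_mul_swap _ hf hg, residueAt_one]

theorem tameAt_eq_one {f g : RatFunc k} (hf : ordAt p f = 0) (hg : ordAt p g = 0) :
    tameAt p f g = 1 := by
  rw [tameAt_eq_residueAt, tameFunction_eq_zpow hf, hg, zpow_zero, residueAt_one]

theorem tameAt_algebraMap_self (hp : Irreducible p) (hpm : p.Monic) {u : k[X]} (hu : ¬ p ∣ u) :
    tameAt p (algebraMap k[X] (RatFunc k) u) (algebraMap k[X] (RatFunc k) p) =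
      AdjoinRoot.mk p u := by
  rw [tameAt_eq_residueAt, tameFunction_eq_zpow (ordAt_algebraMap_eq_zero hp hpm hu),
    ordAt_algebraMap_self hp hpm, zpow_one, residueAt_algebraMap]

theorem tameAt_self (hp : Irreducible p) (hpm : p.Monic) :
    tameAt p (algebraMap k[X] (RatFunc k) p) (algebraMap k[X] (RatFunc k) p) = -1 := by
  have hp₀ := RatFunc.algebraMap_ne_zero hpm.ne_zero
  have : tameFunction (ordAt p) (algebraMap k[X] (RatFunc k) p) (algebraMap k[X] (RatFunc k) p) =
      algebraMap k[X] (RatFunc k) (-1) := by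
    simp [tameFunction, ordAt_algebraMap_self hp hpm, hp₀]
  rw [tameAt_eq_residueAt, this, residueAt_algebraMap, map_neg, map_one]

end TameSymbol

end FinitePlaces

section Infinity

variable {k : Type*} [Field k]

theorem ordInf_mul {f g : RatFunc k} (hf : f ≠ 0) (hg : g ≠ 0) :
    ordInf (f * g) = ordInf f + ordInf g := by
  rw [ordInf, RatFunc.intDegree_mul hf hg, neg_add]
  rfl

theorem ordInf_algebraMap (u : k[X]) :
    ordInf (algebraMap k[X] (RatFunc k) u) = -u.natDegree := by
  rw [ordInf, RatFunc.intDegree_polynomial]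

theorem residueInf_algebraMap (u : k[X]) :
    residueInf (algebraMap k[X] (RatFunc k) u) = u.leadingCoeff := by
  simp [residueInf]

theorem residueInf_mul (f g : RatFunc k) :
    residueInf (f * g) = residueInf f * residueInf g := by
  have num_denom := congrArg leadingCoeff (RatFunc.num_denom_mul f g)
  simp only [leadingCoeff_mul, (RatFunc.monic_denom _).leadingCoeff, mul_one] at num_denom
  simp only [residueInf, (RatFunc.monic_denom _).leadingCoeff, div_one, num_denom]

theorem tameInf_eq_residueInf (f g : RatFunc k) :
    tameInf f g = residueInf (tameFunction ordInf f g) :=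
  rfl

theorem residueInf_zpow (f : RatFunc k) (n : ℤ) : residueInf (f ^ n) = residueInf f ^ n := by
  let residueHom : RatFunc k →*₀ k :=
    { toFun := residueInf
      map_zero' := by simp [residueInf]
      map_one' := by simp [residueInf]
      map_mul' := residueInf_mul }
  exact map_zpow₀ residueHom f n

theorem residueInf_neg_one : residueInf (-1 : RatFunc k) = -1 := by
  simpa using residueInf_algebraMap (-1 : k[X])

theorem tameInf_eq (f g : RatFunc k) :
    tameInf f g = (-1) ^ (ordInf f * ordInf g) * residueInf f ^ ordInf g *
      residueInf g ^ (-ordInf f) := by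
  simp only [tameInf, residueInf_mul, residueInf_zpow, residueInf_neg_one]

theorem tameInf_mul_left {f₁ f₂ g : RatFunc k} (hf₁ : f₁ ≠ 0) (hf₂ : f₂ ≠ 0) (hg : g ≠ 0) :
    tameInf (f₁ * f₂) g = tameInf f₁ g * tameInf f₂ g := by
  simp only [tameInf_eq_residueInf]
  rw [tameFunction_mul_left (ordInf_mul hf₁ hf₂) hg, residueInf_mul]

theorem tameInf_mul_swap {f g : RatFunc k} (hf : f ≠ 0) (hg : g ≠ 0) :
    tameInf f g * tameInf g f = 1 := by
  rw [tameInf_eq_residueInf, tameInf_eq_residueInf, ← residueInf_mul,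
    tameFunction_mul_swap _ hf hg]
  simp [residueInf]

end Infinity

section WeilSymbol

variable {k : Type*} [Field k]

/-- The finite closed points of `ℙ¹_k`, encoded as the monic irreducible polynomials. -/
def finitePlaces (k : Type*) [Field k] : Set k[X] :=
  {p | p.Monic ∧ Irreducible p}

theorem mem_finitePlaces_of_mem_normalizedFactors [DecidableEq k] {p u : k[X]} (hu : u ≠ 0)
    (hp : p ∈ normalizedFactors u) : p ∈ finitePlaces k :=
  have ⟨irreducible, monic, _⟩ := (Polynomial.mem_normalizedFactors_iff hu).1 hp
  ⟨monic, irreducible⟩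

theorem not_dvd_of_mem_finitePlaces {p q : k[X]} (hp : p ∈ finitePlaces k)
    (hq : q ∈ finitePlaces k) (h : p ≠ q) : ¬ p ∣ q := fun hd =>
  h (eq_of_monic_of_associated hp.1 hq.1 (hp.2.associated_of_dvd hq.2 hd))

theorem not_dvd_C_of_mem_finitePlaces {p : k[X]} (hp : p ∈ finitePlaces k) {c : k} (hc : c ≠ 0) :
    ¬ p ∣ C c := fun hd =>
  hp.2.not_isUnit (isUnit_of_dvd_unit hd (isUnit_C.2 hc.isUnit))

theorem mul_induction_on_finitePlaces {P : RatFunc k → Prop}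
    (const : ∀ c : k, c ≠ 0 → P (algebraMap k[X] (RatFunc k) (C c)))
    (place : ∀ p ∈ finitePlaces k, P (algebraMap k[X] (RatFunc k) p))
    (mul : ∀ f g, f ≠ 0 → g ≠ 0 → P f → P g → P (f * g)) (inv : ∀ f, f ≠ 0 → P f → P f⁻¹)
    {f : RatFunc k} (hf : f ≠ 0) : P f := by
  classical
  have poly {u : k[X]} (hu : u ≠ 0) : P (algebraMap k[X] (RatFunc k) u) := by
    have prod_factors : (normalizedFactors u).prod ≠ 0 ∧
        P (algebraMap k[X] (RatFunc k) (normalizedFactors u).prod) := by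
      refine Multiset.prod_induction (fun w => w ≠ 0 ∧ P (algebraMap k[X] (RatFunc k) w)) _
        (fun v w hv hw => ⟨mul_ne_zero hv.1 hw.1, ?_⟩)
        ⟨one_ne_zero, by simpa using const 1 one_ne_zero⟩ fun p hp => ?_
      · rw [map_mul]
        exact mul _ _ (RatFunc.algebraMap_ne_zero hv.1) (RatFunc.algebraMap_ne_zero hw.1) hv.2 hw.2
      · have hp := mem_finitePlaces_of_mem_normalizedFactors hu hp
        exact ⟨hp.1.ne_zero, place p hp⟩
    have hc := leadingCoeff_ne_zero.2 hu
    rw [← leadingCoeff_mul_prod_normalizedFactors u, map_mul]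
    exact mul _ _ (RatFunc.algebraMap_ne_zero (C_ne_zero.2 hc))
      (RatFunc.algebraMap_ne_zero prod_factors.1) (const _ hc) prod_factors.2
  have hn := RatFunc.num_ne_zero hf
  have hd := RatFunc.algebraMap_ne_zero f.denom_ne_zero
  rw [← f.num_div_denom, div_eq_mul_inv]
  exact mul _ _ (RatFunc.algebraMap_ne_zero hn) (inv_ne_zero hd) (poly hn)
    (inv _ hd (poly f.denom_ne_zero))

variable [DecidableEq k]

/-- The product over all closed points of `ℙ¹_k` of the norms of the tame symbols of `f` and `g`,
which Weil reciprocity asserts to be `1`. -/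
noncomputable def weilSymbol (f g : RatFunc k) : k :=
  (∏ᶠ p ∈ finitePlaces k, Algebra.norm k (tameAt p f g)) * tameInf f g

theorem finitePlaces_inter_mulSupport_subset {f g : RatFunc k} {t : Finset k[X]}
    (ht : ∀ p ∈ finitePlaces k, p ∉ t → ordAt p f = 0 ∧ ordAt p g = 0) :
    finitePlaces k ∩ Function.mulSupport (fun p => Algebra.norm k (tameAt p f g)) ⊆ t := by
  rintro p ⟨hp, hp'⟩
  by_contra hpt
  obtain ⟨hf, hg⟩ := ht p hp hpt
  exact hp' (by simp only [tameAt_eq_one hf hg, map_one])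

theorem weilSymbol_eq_prod {f g : RatFunc k} {t : Finset k[X]} (ht : ↑t ⊆ finitePlaces k)
    (h : ∀ p ∈ finitePlaces k, p ∉ t → ordAt p f = 0 ∧ ordAt p g = 0) :
    weilSymbol f g = (∏ p ∈ t, Algebra.norm k (tameAt p f g)) * tameInf f g := by
  rw [weilSymbol, finprod_mem_eq_prod_of_subset _ (finitePlaces_inter_mulSupport_subset h) ht]

theorem ordAt_eq_zero_of_notMem_normalizedFactors {f g : RatFunc k} (hf : f ≠ 0) (hg : g ≠ 0)
    {p : k[X]}
    (hp : p ∉ (normalizedFactors (f.num * f.denom * g.num * g.denom)).toFinset) :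
    ordAt p f = 0 ∧ ordAt p g = 0 := by
  have hfn := RatFunc.num_ne_zero hf
  have hgn := RatFunc.num_ne_zero hg
  have hfd := f.denom_ne_zero
  rw [Multiset.mem_toFinset, normalizedFactors_mul (mul_ne_zero (mul_ne_zero hfn hfd) hgn)
    g.denom_ne_zero, normalizedFactors_mul (mul_ne_zero hfn hfd) hgn,
    normalizedFactors_mul hfn hfd] at hp
  simp only [Multiset.mem_add, not_or, ← Multiset.count_eq_zero] at hp
  obtain ⟨⟨⟨hfn, hfd⟩, hgn⟩, hgd⟩ := hp
  simp [ordAt, hfn, hfd, hgn, hgd]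

theorem finite_finitePlaces_inter_mulSupport {f g : RatFunc k} (hf : f ≠ 0) (hg : g ≠ 0) :
    (finitePlaces k ∩ Function.mulSupport fun p => Algebra.norm k (tameAt p f g)).Finite :=
  (Finset.finite_toSet _).subset <| finitePlaces_inter_mulSupport_subset fun _ _ =>
    ordAt_eq_zero_of_notMem_normalizedFactors hf hg

theorem weilSymbol_mul_left {f₁ f₂ g : RatFunc k} (hf₁ : f₁ ≠ 0) (hf₂ : f₂ ≠ 0) (hg : g ≠ 0) :
    weilSymbol (f₁ * f₂) g = weilSymbol f₁ g * weilSymbol f₂ g := by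
  have norm_mul (p : k[X]) (hp : p ∈ finitePlaces k) : Algebra.norm k (tameAt p (f₁ * f₂) g) =
      Algebra.norm k (tameAt p f₁ g) * Algebra.norm k (tameAt p f₂ g) := by
    rw [tameAt_mul_left hp.2 hp.1 hf₁ hf₂ hg, map_mul]
  rw [weilSymbol, finprod_mem_congr rfl norm_mul, finprod_mem_mul_distrib'
    (finite_finitePlaces_inter_mulSupport hf₁ hg) (finite_finitePlaces_inter_mulSupport hf₂ hg),
    tameInf_mul_left hf₁ hf₂ hg, mul_mul_mul_comm]
  rfl

theorem weilSymbol_mul_swap {f g : RatFunc k} (hf : f ≠ 0) (hg : g ≠ 0) :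
    weilSymbol f g * weilSymbol g f = 1 := by
  have norm_mul (p : k[X]) (hp : p ∈ finitePlaces k) :
      Algebra.norm k (tameAt p f g) * Algebra.norm k (tameAt p g f) = 1 := by
    rw [← map_mul, tameAt_mul_swap hp.2 hp.1 hf hg, map_one]
  rw [weilSymbol, weilSymbol, mul_mul_mul_comm, tameInf_mul_swap hf hg,
    ← finprod_mem_mul_distrib' (finite_finitePlaces_inter_mulSupport hf hg)
      (finite_finitePlaces_inter_mulSupport hg hf), finprod_mem_of_eqOn_one norm_mul, mul_one]

theorem weilSymbol_const_const {c d : k} (hc : c ≠ 0) (hd : d ≠ 0) :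
    weilSymbol (algebraMap k[X] (RatFunc k) (C c)) (algebraMap k[X] (RatFunc k) (C d)) = 1 := by
  rw [weilSymbol_eq_prod (t := ∅) (by simp) fun r hr _ =>
    ⟨ordAt_algebraMap_eq_zero hr.2 hr.1 (not_dvd_C_of_mem_finitePlaces hr hc),
      ordAt_algebraMap_eq_zero hr.2 hr.1 (not_dvd_C_of_mem_finitePlaces hr hd)⟩]
  simp only [Finset.prod_empty, tameInf_eq, ordInf_algebraMap, natDegree_C]
  simp

theorem weilSymbol_const_place {c : k} (hc : c ≠ 0) {p : k[X]} (hp : p ∈ finitePlaces k) :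
    weilSymbol (algebraMap k[X] (RatFunc k) (C c)) (algebraMap k[X] (RatFunc k) p) = 1 := by
  rw [weilSymbol_eq_prod (t := {p}) (by simpa using hp) fun r hr hrp =>
    ⟨ordAt_algebraMap_eq_zero hr.2 hr.1 (not_dvd_C_of_mem_finitePlaces hr hc),
      ordAt_algebraMap_eq_zero hr.2 hr.1
        (not_dvd_of_mem_finitePlaces hr hp (by simpa using hrp))⟩,
    Finset.prod_singleton,
    tameAt_algebraMap_self hp.2 hp.1 (not_dvd_C_of_mem_finitePlaces hp hc),
    norm_adjoinRoot_mk_C hp.1, tameInf_eq]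
  simp [ordInf_algebraMap, residueInf_algebraMap, hp.1.leadingCoeff, hc, -RatFunc.algebraMap_C]

theorem weilSymbol_place_self {p : k[X]} (hp : p ∈ finitePlaces k) :
    weilSymbol (algebraMap k[X] (RatFunc k) p) (algebraMap k[X] (RatFunc k) p) = 1 := by
  have norm_neg_one : Algebra.norm k (-1 : AdjoinRoot p) = (-1) ^ p.natDegree := by
    simpa using norm_adjoinRoot_mk_C hp.1 (-1)
  rw [weilSymbol_eq_prod (t := {p}) (by simpa using hp) fun r hr hrp =>
    and_self_iff.2 (ordAt_algebraMap_eq_zero hr.2 hr.1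
        (not_dvd_of_mem_finitePlaces hr hp (by simpa using hrp))),
    Finset.prod_singleton, tameAt_self hp.2 hp.1, norm_neg_one, tameInf_eq]
  simp only [ordInf_algebraMap, residueInf_algebraMap, hp.1.leadingCoeff, one_zpow, mul_one,
    neg_mul_neg]
  rw [← Nat.cast_mul, zpow_natCast, ← pow_add]
  exact Even.neg_one_pow (by simpa [mul_add, add_comm] using Nat.even_mul_succ_self p.natDegree)

theorem weilSymbol_place_place_of_ne {p q : k[X]} (hp : p ∈ finitePlaces k)
    (hq : q ∈ finitePlaces k) (hpq : p ≠ q) :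
    weilSymbol (algebraMap k[X] (RatFunc k) p) (algebraMap k[X] (RatFunc k) q) = 1 := by
  have norm_tameAt_p : Algebra.norm k
      (tameAt p (algebraMap k[X] (RatFunc k) p) (algebraMap k[X] (RatFunc k) q)) *
        Algebra.norm k (AdjoinRoot.mk p q) = 1 := by
    rw [← tameAt_algebraMap_self hp.2 hp.1 (not_dvd_of_mem_finitePlaces hp hq hpq), ← map_mul,
      tameAt_mul_swap hp.2 hp.1 (RatFunc.algebraMap_ne_zero hp.1.ne_zero)
        (RatFunc.algebraMap_ne_zero hq.1.ne_zero), map_one]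
  have tameInf_eq_sign : tameInf (algebraMap k[X] (RatFunc k) p) (algebraMap k[X] (RatFunc k) q) =
      (-1) ^ (p.natDegree * q.natDegree) := by
    rw [tameInf_eq]
    simp only [ordInf_algebraMap, residueInf_algebraMap, hp.1.leadingCoeff, hq.1.leadingCoeff,
      one_zpow, mul_one, neg_mul_neg]
    rw [← Nat.cast_mul, zpow_natCast]
  rw [weilSymbol_eq_prod (t := {p, q}) (by simp [Set.insert_subset_iff, hp, hq]) fun r hr hrt => by
      simp only [Finset.mem_insert, Finset.mem_singleton, not_or] at hrt
      exact ⟨ordAt_algebraMap_eq_zero hr.2 hr.1 (not_dvd_of_mem_finitePlaces hr hp hrt.1),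
        ordAt_algebraMap_eq_zero hr.2 hr.1 (not_dvd_of_mem_finitePlaces hr hq hrt.2)⟩,
    Finset.prod_pair hpq, tameInf_eq_sign,
    tameAt_algebraMap_self hq.2 hq.1 (not_dvd_of_mem_finitePlaces hq hp hpq.symm), mul_assoc,
    mul_comm (Algebra.norm k (AdjoinRoot.mk q p)), ← norm_adjoinRoot_mk_comm hp.1 hq.1,
    norm_tameAt_p]

theorem weilSymbol_eq_one_of_generators {g : RatFunc k} (hg : g ≠ 0)
    (const : ∀ c : k, c ≠ 0 → weilSymbol (algebraMap k[X] (RatFunc k) (C c)) g = 1)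
    (place : ∀ p ∈ finitePlaces k, weilSymbol (algebraMap k[X] (RatFunc k) p) g = 1)
    {f : RatFunc k} (hf : f ≠ 0) : weilSymbol f g = 1 := by
  refine mul_induction_on_finitePlaces (P := (weilSymbol · g = 1)) const place
    (fun f₁ f₂ hf₁ hf₂ h₁ h₂ => ?_) (fun f hf h => ?_) hf
  · rw [weilSymbol_mul_left hf₁ hf₂ hg, h₁, h₂, mul_one]
  · have := weilSymbol_mul_left (inv_ne_zero hf) hf hg
    rwa [inv_mul_cancel₀ hf, h, mul_one, ← map_one (algebraMap k[X] (RatFunc k)), ← C_1,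
      const 1 one_ne_zero, eq_comm] at this

theorem weilSymbol_eq_one_symm {f g : RatFunc k} (hf : f ≠ 0) (hg : g ≠ 0)
    (h : weilSymbol f g = 1) : weilSymbol g f = 1 := by
  simpa [h] using weilSymbol_mul_swap hf hg

theorem weilSymbol_eq_one {f g : RatFunc k} (hf : f ≠ 0) (hg : g ≠ 0) : weilSymbol f g = 1 := by
  have const_ne_zero {c : k} (hc : c ≠ 0) : algebraMap k[X] (RatFunc k) (C c) ≠ 0 :=
    RatFunc.algebraMap_ne_zero (C_ne_zero.2 hc)
  have place_ne_zero {p : k[X]} (hp : p ∈ finitePlaces k) : algebraMap k[X] (RatFunc k) p ≠ 0 :=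
    RatFunc.algebraMap_ne_zero hp.1.ne_zero
  refine weilSymbol_eq_one_of_generators hg (fun c hc => ?_) (fun p hp => ?_) hf
  · refine weilSymbol_eq_one_symm hg (const_ne_zero hc) <|
      weilSymbol_eq_one_of_generators (const_ne_zero hc) (fun d hd => weilSymbol_const_const hd hc)
        (fun q hq => weilSymbol_eq_one_symm (const_ne_zero hc) (place_ne_zero hq)
          (weilSymbol_const_place hc hq)) hg
  · refine weilSymbol_eq_one_symm hg (place_ne_zero hp) <|
      weilSymbol_eq_one_of_generators (place_ne_zero hp) (fun d hd => weilSymbol_const_place hd hp)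
        (fun q hq => ?_) hg
    rcases eq_or_ne q p with rfl | hqp
    · exact weilSymbol_place_self hq
    · exact weilSymbol_place_place_of_ne hq hp hqp

end WeilSymbol

/-- Weil reciprocity for `ℙ¹_k` in degree 2: for nonzero rational functions `f, g`,
the product over all closed points `P` of `N_{k(P)/k}(∂_P({f,g}))` equals `1`.
(Only the points dividing the numerators or denominators of `f` and `g`, together
with the point at infinity, contribute nontrivially.) -/
theorem stmt_16 {k : Type*} [Field k] [DecidableEq k] (f g : RatFunc k)
    (hf : f ≠ 0) (hg : g ≠ 0) :
    (∏ p ∈ (normalizedFactors (f.num * f.denom * g.num * g.denom)).toFinset,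
        Algebra.norm k (tameAt p f g)) * tameInf f g = 1 := by
  have hu : f.num * f.denom * g.num * g.denom ≠ 0 :=
    mul_ne_zero (mul_ne_zero (mul_ne_zero (RatFunc.num_ne_zero hf) f.denom_ne_zero)
      (RatFunc.num_ne_zero hg)) g.denom_ne_zero
  have support_subset : ↑(normalizedFactors (f.num * f.denom * g.num * g.denom)).toFinset ⊆
      finitePlaces k := fun _ hp =>
    mem_finitePlaces_of_mem_normalizedFactors hu (Multiset.mem_toFinset.1 hp)
  rw [← weilSymbol_eq_prod support_subset fun _ _ =>
    ordAt_eq_zero_of_notMem_normalizedFactors hf hg]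
  exact weilSymbol_eq_one hf hg
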